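/- arXiv:1302.6094 — 2 statements merged into one kernel-verified Lean document; each statement's English description precedes it below -/
import Mathlib

section
/- There exists an absolute constant C such that for every integer d ≥ 2, |θ_d − 1/2^{d+1}| ≤ C/3^d, where θ_d = 1 − ∏_p (1 − (p−1)/p^{d+1}), the product taken over all primes p. -/
/-!
Write `a p = (p-1)/p^(d+1)`, so that `0 ≤ a p ≤ 1` and `a 2 = 1/2^(d+1)`. Over any finite set `s` of
primes containing `2`, the partial product of the `1 - a p` is at most its factor `1 - a 2`, and at
least `1 - ∑ p ∈ s, a p` by the Weierstrass product inequality. Hence `θ_d - a 2` lies between `0`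
and the sum of `a p` over odd primes. For `p ≥ 3` we have
`a p ≤ 1/p^d ≤ (9/3^d) * (1/p^2)` (`primeTerm_le`), so that sum is at most `C/3^d` with
`C = 9 * ∑ 1/p^2`.
-/

/-- `θ_d = 1 - ∏_p (1 - (p-1)/p^(d+1))`, product over all primes. -/
noncomputable def theta (d : ℕ) : ℝ :=
  1 - ∏' p : Nat.Primes, (1 - (((p : ℕ) : ℝ) - 1) / ((p : ℕ) : ℝ) ^ (d + 1))

/-- The local term `(p-1)/p^(d+1)` of the Euler product defining `theta d`. -/
noncomputable def primeTerm (d : ℕ) (p : Nat.Primes) : ℝ :=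
  (((p : ℕ) : ℝ) - 1) / ((p : ℕ) : ℝ) ^ (d + 1)

lemma primeTerm_nonneg (d : ℕ) (p : Nat.Primes) : 0 ≤ primeTerm d p := by
  have hp : (1 : ℝ) ≤ ((p : ℕ) : ℝ) := by exact_mod_cast p.2.one_le
  unfold primeTerm
  have : (0 : ℝ) ≤ ((p : ℕ) : ℝ) - 1 := by linarith
  positivity

lemma primeTerm_le_inv_pow (d : ℕ) (p : Nat.Primes) :
    primeTerm d p ≤ 1 / ((p : ℕ) : ℝ) ^ d := by
  have hp : (0 : ℝ) < ((p : ℕ) : ℝ) := by exact_mod_cast p.2.pos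
  unfold primeTerm
  rw [div_le_div_iff₀ (by positivity) (by positivity), pow_succ]
  nlinarith [pow_pos hp d]

lemma primeTerm_le_one (d : ℕ) (p : Nat.Primes) : primeTerm d p ≤ 1 := by
  have hp : (1 : ℝ) ≤ ((p : ℕ) : ℝ) := by exact_mod_cast p.2.one_le
  refine (primeTerm_le_inv_pow d p).trans ?_
  rw [div_le_one (by positivity)]
  exact one_le_pow₀ hp

/-- Splitting `p^d = p^2 * p^(d-2)` isolates the decay in `d` from a summable function of `p`. -/
lemma primeTerm_le {d : ℕ} (hd : 2 ≤ d) (p : Nat.Primes) (hp : 3 ≤ (p : ℕ)) :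
    primeTerm d p ≤ 9 / 3 ^ d * (1 / ((p : ℕ) : ℝ) ^ 2) := by
  have hp' : (3 : ℝ) ≤ ((p : ℕ) : ℝ) := by exact_mod_cast hp
  refine (primeTerm_le_inv_pow d p).trans ?_
  obtain ⟨k, rfl⟩ := Nat.exists_eq_add_of_le hd
  have h : (3 : ℝ) ^ k ≤ ((p : ℕ) : ℝ) ^ k := pow_le_pow_left₀ (by norm_num) hp' k
  have e : (9 : ℝ) / 3 ^ (2 + k) * (1 / ((p : ℕ) : ℝ) ^ 2)
      = 1 / (((p : ℕ) : ℝ) ^ 2 * 3 ^ k) := by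
    rw [pow_add]; field_simp; norm_num
  rw [e, pow_add]
  gcongr

lemma summable_primes_inv_sq : Summable fun p : Nat.Primes => 1 / ((p : ℕ) : ℝ) ^ 2 :=
  (Real.summable_one_div_nat_pow.mpr one_lt_two).comp_injective Subtype.val_injective

lemma summable_primeTerm {d : ℕ} (hd : 2 ≤ d) : Summable (primeTerm d) := by
  refine Summable.of_nonneg_of_le (primeTerm_nonneg d) (fun p => ?_) summable_primes_inv_sq
  have hp : (1 : ℝ) ≤ ((p : ℕ) : ℝ) := by exact_mod_cast p.2.one_le
  refine (primeTerm_le_inv_pow d p).trans ?_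
  gcongr

/-- The Weierstrass product inequality. -/
lemma one_sub_sum_le_prod {ι : Type*} (s : Finset ι) (f : ι → ℝ) (h0 : ∀ i, 0 ≤ f i)
    (h1 : ∀ i, f i ≤ 1) : 1 - ∑ i ∈ s, f i ≤ ∏ i ∈ s, (1 - f i) := by
  classical
  induction s using Finset.induction_on with
  | empty => simp
  | insert a s ha ih =>
    rw [Finset.sum_insert ha, Finset.prod_insert ha]
    have hs : 0 ≤ ∑ i ∈ s, f i := Finset.sum_nonneg fun i _ => h0 i
    nlinarith [mul_le_mul_of_nonneg_left ih (sub_nonneg.mpr (h1 a)), mul_nonneg (h0 a) hs]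

/-- Bounds for the partial products of `1 - primeTerm d p` over finite sets containing `2`. -/
lemma partialProd_bounds {d : ℕ} (hd : 2 ≤ d) (s : Finset Nat.Primes)
    (hs : (⟨2, Nat.prime_two⟩ : Nat.Primes) ∈ s) :
    1 - 1 / 2 ^ (d + 1) - 9 / 3 ^ d * ∑' p : Nat.Primes, 1 / ((p : ℕ) : ℝ) ^ 2
        ≤ ∏ p ∈ s, (1 - primeTerm d p) ∧
      ∏ p ∈ s, (1 - primeTerm d p) ≤ 1 - 1 / 2 ^ (d + 1) := by
  classical
  have h2 : primeTerm d ⟨2, Nat.prime_two⟩ = 1 / 2 ^ (d + 1) := by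
    norm_num [primeTerm]
  constructor
  · refine le_trans ?_ (one_sub_sum_le_prod s _ (primeTerm_nonneg d) (primeTerm_le_one d))
    rw [← Finset.add_sum_erase s _ hs, h2]
    have : ∑ p ∈ s.erase ⟨2, Nat.prime_two⟩, primeTerm d p
        ≤ 9 / 3 ^ d * ∑' p : Nat.Primes, 1 / ((p : ℕ) : ℝ) ^ 2 := by
      calc ∑ p ∈ s.erase ⟨2, Nat.prime_two⟩, primeTerm d p
          ≤ ∑ p ∈ s.erase ⟨2, Nat.prime_two⟩, 9 / 3 ^ d * (1 / ((p : ℕ) : ℝ) ^ 2) := by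
            refine Finset.sum_le_sum fun p hp => primeTerm_le hd p ?_
            have hne : (p : ℕ) ≠ 2 := fun h => (Finset.mem_erase.mp hp).1 (Subtype.ext h)
            have := p.2.two_le
            omega
        _ = 9 / 3 ^ d * ∑ p ∈ s.erase ⟨2, Nat.prime_two⟩, 1 / ((p : ℕ) : ℝ) ^ 2 := by
            rw [Finset.mul_sum]
        _ ≤ _ := by
            gcongr
            exact summable_primes_inv_sq.sum_le_tsum _ fun p _ => by positivity
    linarith
  · rw [← Finset.mul_prod_erase s _ hs, h2]
    refine mul_le_of_le_one_right ?_ (Finset.prod_le_one ?_ ?_)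
    · rw [← h2]; exact sub_nonneg.mpr (primeTerm_le_one d _)
    · exact fun p _ => sub_nonneg.mpr (primeTerm_le_one d p)
    · exact fun p _ => sub_le_self _ (primeTerm_nonneg d p)

/-- Convergence of the product, so that the `∏'` in `theta` is the limit of partial products. -/
lemma multipliable_one_sub_primeTerm {d : ℕ} (hd : 2 ≤ d) :
    Multipliable fun p => 1 - primeTerm d p := by
  simpa [sub_eq_add_neg] using
    Real.multipliable_one_add_of_summable (summable_primeTerm hd).neg

theorem theta_asymptotic :
    ∃ C : ℝ, ∀ d : ℕ, 2 ≤ d →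
      |theta d - 1 / 2 ^ (d + 1)| ≤ C / 3 ^ d := by
  refine ⟨9 * ∑' p : Nat.Primes, 1 / ((p : ℕ) : ℝ) ^ 2, fun d hd => ?_⟩
  have hlim := (multipliable_one_sub_primeTerm hd).hasProd
  have hev := Filter.eventually_ge_atTop ({⟨2, Nat.prime_two⟩} : Finset Nat.Primes)
  have hlo := ge_of_tendsto hlim (hev.mono fun s hs =>
    (partialProd_bounds hd s (Finset.singleton_subset_iff.mp hs)).1)
  have hhi := le_of_tendsto hlim (hev.mono fun s hs =>
    (partialProd_bounds hd s (Finset.singleton_subset_iff.mp hs)).2)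
  have hθ : theta d = 1 - ∏' p, (1 - primeTerm d p) := rfl
  rw [hθ, mul_div_right_comm, abs_le]
  constructor <;> linarith
end

section
/- There exists an absolute constant C such that for every integer d ≥ 2, |ρ_d − 1/2^{d+2}| ≤ C/3^d, where ρ_d = 1 − ∏_p (1 − (p−1)²/p^{d+2}), the product taken over all primes p. -/
/-!
Write `a_p = (p-1)²/p^(d+2)`, so that `a_2 = 1/2^(d+2)` and `0 ≤ a_p ≤ 1`. Every finite partial
product over a set `s` of primes containing `2` satisfies
`1 - ∑_{p ∈ s} a_p ≤ ∏_{p ∈ s} (1 - a_p) ≤ 1 - a_2`, the lower bound being the Weierstrass product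
inequality. For `p ≥ 3` one has `a_p ≤ p⁻ᵈ ≤ 9/3^d · p⁻²`, so the primes other than `2` contribute
at most `9 (∑_p p⁻²)/3^d` to the sum. Passing to the limit over `s` gives
`0 ≤ ρ_d - a_2 ≤ 9 (∑_p p⁻²)/3^d`.
-/

/-- `ρ_d = 1 - ∏_p (1 - (p-1)^2/p^(d+2))`, product over all primes. -/
noncomputable def rho (d : ℕ) : ℝ :=
  1 - ∏' p : Nat.Primes, (1 - (((p : ℕ) : ℝ) - 1) ^ 2 / ((p : ℕ) : ℝ) ^ (d + 2))

/-- The Weierstrass product inequality. -/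
lemma one_sub_sum_le_prod_aux {ι : Type*} (f : ι → ℝ) (h0 : ∀ i, 0 ≤ f i) (h1 : ∀ i, f i ≤ 1)
    (s : Finset ι) : 1 - ∑ i ∈ s, f i ≤ ∏ i ∈ s, (1 - f i) := by
  classical
  induction s using Finset.induction_on with
  | empty => simp
  | insert a s ha ih =>
    rw [Finset.sum_insert ha, Finset.prod_insert ha]
    have hS : 0 ≤ ∑ i ∈ s, f i := Finset.sum_nonneg fun i _ => h0 i
    nlinarith [mul_le_mul_of_nonneg_left ih (sub_nonneg.2 (h1 a)), mul_nonneg (h0 a) hS]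

lemma term_le_inv_pow (d : ℕ) (p : ℕ) (hp : 2 ≤ p) :
    ((p : ℝ) - 1) ^ 2 / (p : ℝ) ^ (d + 2) ≤ 1 / (p : ℝ) ^ d := by
  have hp' : (2 : ℝ) ≤ p := by exact_mod_cast hp
  rw [div_le_div_iff₀ (by positivity) (by positivity), one_mul, pow_add, mul_comm]
  gcongr <;> linarith

lemma term_le_of_three_le (d : ℕ) (hd : 2 ≤ d) (p : ℕ) (hp : 3 ≤ p) :
    ((p : ℝ) - 1) ^ 2 / (p : ℝ) ^ (d + 2) ≤ 9 / 3 ^ d * (1 / (p : ℝ) ^ 2) := by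
  refine (term_le_inv_pow d p (by lia)).trans ?_
  obtain ⟨k, rfl⟩ := Nat.exists_eq_add_of_le hd
  have hp' : (3 : ℝ) ≤ p := by exact_mod_cast hp
  have h : (3 : ℝ) ^ k ≤ (p : ℝ) ^ k := by gcongr
  have e : (9 : ℝ) / 3 ^ (2 + k) * (1 / (p : ℝ) ^ 2) = 1 / (3 ^ k * (p : ℝ) ^ 2) := by
    rw [pow_add]; field_simp; norm_num
  rw [e, pow_add, mul_comm ((p : ℝ) ^ 2)]
  gcongr

theorem rho_asymptotic :
    ∃ C : ℝ, ∀ d : ℕ, 2 ≤ d →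
      |rho d - 1 / 2 ^ (d + 2)| ≤ C / 3 ^ d := by
  classical
  have hsum : Summable fun p : Nat.Primes => 1 / ((p : ℕ) : ℝ) ^ 2 :=
    (Real.summable_one_div_nat_pow.2 one_lt_two).comp_injective Nat.Primes.coe_nat_injective
  refine ⟨9 * ∑' p : Nat.Primes, 1 / ((p : ℕ) : ℝ) ^ 2, fun d hd => ?_⟩
  set a : Nat.Primes → ℝ := fun p => (((p : ℕ) : ℝ) - 1) ^ 2 / ((p : ℕ) : ℝ) ^ (d + 2) with ha
  have h0 : ∀ p, 0 ≤ a p := fun p => by positivity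
  have hle : ∀ p, a p ≤ 1 / ((p : ℕ) : ℝ) ^ d := fun p => term_le_inv_pow d p p.2.two_le
  have h1 : ∀ p, a p ≤ 1 := fun p => (hle p).trans (by
    have : (1 : ℝ) ≤ ((p : ℕ) : ℝ) := by exact_mod_cast p.2.one_le
    exact div_le_one_of_le₀ (one_le_pow₀ this) (by positivity))
  have hasum : Summable a :=
    Summable.of_nonneg_of_le h0 hle
      ((Real.summable_one_div_nat_pow.2 (by lia)).comp_injective Nat.Primes.coe_nat_injective)
  have hmul : Multipliable fun p => 1 - a p := by
    simpa [sub_eq_add_neg] using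
      multipliable_one_add_of_summable (f := fun p => -a p) (by simpa using hasum.abs)
  have hlim : Filter.Tendsto (fun s : Finset Nat.Primes => ∏ p ∈ s, (1 - a p)) Filter.atTop
      (nhds (∏' p, (1 - a p))) := by
    have := hmul.hasProd
    simpa [HasProd] using this
  let two : Nat.Primes := ⟨2, Nat.prime_two⟩
  have ha2 : a two = 1 / 2 ^ (d + 2) := by
    simp only [ha, two]; norm_num
  have hev : ∀ᶠ s : Finset Nat.Primes in Filter.atTop, two ∈ s := by
    filter_upwards [Filter.eventually_ge_atTop {two}] with s hs
    exact hs (by simp)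
  have hup : ∏' p, (1 - a p) ≤ 1 - a two := by
    refine le_of_tendsto hlim ?_
    filter_upwards [hev] with s hs
    rw [← Finset.mul_prod_erase s _ hs]
    refine mul_le_of_le_one_right (sub_nonneg.2 (h1 _)) ?_
    exact Finset.prod_le_one (fun p _ => sub_nonneg.2 (h1 p)) fun p _ => by linarith [h0 p]
  have hlow : 1 - a two - 9 / 3 ^ d * ∑' p : Nat.Primes, 1 / ((p : ℕ) : ℝ) ^ 2
      ≤ ∏' p, (1 - a p) := by
    refine ge_of_tendsto hlim ?_
    filter_upwards [hev] with s hs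
    refine le_trans ?_ (one_sub_sum_le_prod_aux a h0 h1 s)
    rw [← Finset.add_sum_erase s _ hs]
    have : ∑ p ∈ s.erase two, a p ≤ 9 / 3 ^ d * ∑' p : Nat.Primes, 1 / ((p : ℕ) : ℝ) ^ 2 := by
      calc ∑ p ∈ s.erase two, a p
          ≤ ∑ p ∈ s.erase two, 9 / 3 ^ d * (1 / ((p : ℕ) : ℝ) ^ 2) := by
            refine Finset.sum_le_sum fun p hp => term_le_of_three_le d hd p ?_
            have hne : (p : ℕ) ≠ 2 := fun h => (Finset.mem_erase.1 hp).1 (Subtype.ext h)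
            have := p.2.two_le
            lia
        _ = 9 / 3 ^ d * ∑ p ∈ s.erase two, 1 / ((p : ℕ) : ℝ) ^ 2 := by rw [Finset.mul_sum]
        _ ≤ _ := by
            gcongr
            exact hsum.sum_le_tsum _ fun p _ => by positivity
    linarith
  have hrho : rho d = 1 - ∏' p, (1 - a p) := rfl
  rw [hrho, ← ha2, abs_le, mul_div_right_comm]
  constructor
  · have : 0 ≤ 9 / 3 ^ d * ∑' p : Nat.Primes, 1 / ((p : ℕ) : ℝ) ^ 2 :=
      mul_nonneg (by positivity) (tsum_nonneg fun p => by positivity)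
    linarith
  · linarith
end
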